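/- arXiv:1610.08861 — 2 statements merged into one kernel-verified Lean document; each statement's English description precedes it below -/
import Mathlib

section
/- Let μ be a probability measure on ℝ that is symmetric under negation, and let k(r) = ∫_ℝ cos(r x) dμ(x) be its (real-valued) characteristic function. Fix real numbers x₁, …, xₙ and set K_{ij} = k(x_i − x_j). Let w₁, …, w_D be independent random variables each with law μ, and for l = 1, …, D let K̃^{(l)} be the complex n×n matrix with entries K̃^{(l)}_{ij} = e^{i w_l (x_i − x_j)}. Then E[(1/D) Σ_{l=1}^D K̃^{(l)}_{ij}] = K_{ij} for all i, j, and E[Σ_{i,j=1}^n |(1/D) Σ_{l=1}^D K̃^{(l)}_{ij} − K_{ij}|²] = (1/D)(n² − Σ_{i,j=1}^n K_{ij}²). -/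
open MeasureTheory ProbabilityTheory

/-!
The feature matrix has entries given by the empirical characteristic function of the frequencies
`w₁, …, w_D` at `xᵢ - xⱼ`: a sample mean of unimodular random variables whose common expectation is
`charFun μ (xᵢ - xⱼ)`. By Bienaymé's identity in the Hilbert space `ℂ`, the mean squared error of
such a sample mean is `(1 - ‖charFun μ (xᵢ - xⱼ)‖²) / D`. For symmetric `μ` the characteristic
function is real, and equal to the kernel `k`.
-/

section SampleMean

open scoped RealInnerProductSpace

variable {Ω ι H : Type*} [MeasurableSpace Ω] {P : Measure Ω}
  [NormedAddCommGroup H] [InnerProductSpace ℝ H]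

theorem integrable_inner_of_memLp_two {X Y : Ω → H} (hX : MemLp X 2 P) (hY : MemLp Y 2 P) :
    Integrable (fun ω ↦ ⟪X ω, Y ω⟫) P :=
  (hX.norm.integrable_mul hY.norm).mono (hX.1.inner hY.1) <| .of_forall fun ω ↦ by
    simpa using norm_inner_le_norm (𝕜 := ℝ) (X ω) (Y ω)

theorem integral_norm_sum_sq_of_integral_inner_eq_zero {Z : ι → Ω → H} {s : Finset ι}
    (hZ : ∀ i ∈ s, MemLp (Z i) 2 P)
    (horth : Set.Pairwise s fun i j ↦ ∫ ω, ⟪Z i ω, Z j ω⟫ ∂P = 0) :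
    ∫ ω, ‖∑ i ∈ s, Z i ω‖ ^ 2 ∂P = ∑ i ∈ s, ∫ ω, ‖Z i ω‖ ^ 2 ∂P := by
  have hint : ∀ i ∈ s, ∀ j ∈ s, Integrable (fun ω ↦ ⟪Z i ω, Z j ω⟫) P := fun i hi j hj ↦
    integrable_inner_of_memLp_two (hZ i hi) (hZ j hj)
  calc ∫ ω, ‖∑ i ∈ s, Z i ω‖ ^ 2 ∂P
      = ∫ ω, ∑ i ∈ s, ∑ j ∈ s, ⟪Z i ω, Z j ω⟫ ∂P := by
        simp_rw [← real_inner_self_eq_norm_sq, sum_inner, inner_sum]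
    _ = ∑ i ∈ s, ∑ j ∈ s, ∫ ω, ⟪Z i ω, Z j ω⟫ ∂P := by
        rw [integral_finsetSum _ fun i hi ↦ integrable_finsetSum _ (hint i hi)]
        exact Finset.sum_congr rfl fun i hi ↦ integral_finsetSum _ (hint i hi)
    _ = ∑ i ∈ s, ∫ ω, ‖Z i ω‖ ^ 2 ∂P := by
        refine Finset.sum_congr rfl fun i hi ↦ ?_
        rw [Finset.sum_eq_single_of_mem i hi fun j hj hji ↦ horth hi hj hji.symm]
        simp only [real_inner_self_eq_norm_sq]

variable [CompleteSpace H]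

theorem integral_norm_sub_integral_sq [IsProbabilityMeasure P] {X : Ω → H} (hX : MemLp X 2 P) :
    ∫ ω, ‖X ω - ∫ ω', X ω' ∂P‖ ^ 2 ∂P = ∫ ω, ‖X ω‖ ^ 2 ∂P - ‖∫ ω, X ω ∂P‖ ^ 2 := by
  have hX1 : Integrable X P := hX.integrable one_le_two
  set m := ∫ ω, X ω ∂P
  have hsq : Integrable (fun ω ↦ ‖X ω‖ ^ 2) P := hX.norm.integrable_sq
  have hinner : Integrable (fun ω ↦ 2 * ⟪m, X ω⟫) P := (hX1.const_inner m).const_mul 2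
  calc ∫ ω, ‖X ω - m‖ ^ 2 ∂P = ∫ ω, (‖X ω‖ ^ 2 - 2 * ⟪m, X ω⟫ + ‖m‖ ^ 2) ∂P := by
        simp only [norm_sub_sq_real, real_inner_comm]
    _ = ∫ ω, ‖X ω‖ ^ 2 ∂P - 2 * ⟪m, m⟫ + ‖m‖ ^ 2 := by
        rw [integral_add (by exact hsq.sub hinner) (integrable_const _), integral_sub hsq hinner,
          integral_const_mul, integral_inner hX1, integral_const, probReal_univ, one_smul]
    _ = ∫ ω, ‖X ω‖ ^ 2 ∂P - ‖m‖ ^ 2 := by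
        rw [real_inner_self_eq_norm_sq]
        ring

variable [MeasurableSpace H] [BorelSpace H]

theorem integral_inner_eq_inner_integral_of_indepFun {X Y : Ω → H} (hXY : X ⟂ᵢ[P] Y)
    (hX : Integrable X P) (hY : Integrable Y P) :
    ∫ ω, ⟪X ω, Y ω⟫ ∂P = ⟪∫ ω, X ω ∂P, ∫ ω, Y ω ∂P⟫ :=
  hXY.integral_bilin hX hY (innerSL ℝ)

theorem integral_norm_sum_sub_integral_sq [IsProbabilityMeasure P] {Z : ι → Ω → H} {s : Finset ι}
    (hZ : ∀ i ∈ s, MemLp (Z i) 2 P) (hindep : Set.Pairwise s fun i j ↦ Z i ⟂ᵢ[P] Z j) :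
    ∫ ω, ‖∑ i ∈ s, (Z i ω - ∫ ω', Z i ω' ∂P)‖ ^ 2 ∂P =
      ∑ i ∈ s, (∫ ω, ‖Z i ω‖ ^ 2 ∂P - ‖∫ ω, Z i ω ∂P‖ ^ 2) := by
  have hcent : ∀ i ∈ s, MemLp (fun ω ↦ Z i ω - ∫ ω', Z i ω' ∂P) 2 P := fun i hi ↦
    (hZ i hi).sub (memLp_const _)
  have hmean : ∀ i ∈ s, ∫ ω, (Z i ω - ∫ ω', Z i ω' ∂P) ∂P = 0 := fun i hi ↦ by
    simp [integral_sub ((hZ i hi).integrable one_le_two) (integrable_const _)]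
  rw [integral_norm_sum_sq_of_integral_inner_eq_zero hcent fun i hi j hj hij ↦ ?_]
  · exact Finset.sum_congr rfl fun i hi ↦ integral_norm_sub_integral_sq (hZ i hi)
  · have hij_cent := (hindep hi hj hij).comp
      (measurable_id.sub_const (∫ ω, Z i ω ∂P)) (measurable_id.sub_const (∫ ω, Z j ω ∂P))
    have h := integral_inner_eq_inner_integral_of_indepFun hij_cent
      ((hcent i hi).integrable one_le_two) ((hcent j hj).integrable one_le_two)
    simpa [hmean i hi] using h

theorem integral_norm_sampleMean_sub_sq [Fintype ι] [Nonempty ι] [IsProbabilityMeasure P]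
    {Z : ι → Ω → H} {m : H} {v : ℝ} (hZ : ∀ i, MemLp (Z i) 2 P)
    (hindep : Pairwise fun i j ↦ Z i ⟂ᵢ[P] Z j)
    (hmean : ∀ i, ∫ ω, Z i ω ∂P = m) (hsq : ∀ i, ∫ ω, ‖Z i ω‖ ^ 2 ∂P = v) :
    ∫ ω, ‖(Fintype.card ι : ℝ)⁻¹ • ∑ i, Z i ω - m‖ ^ 2 ∂P =
      (Fintype.card ι : ℝ)⁻¹ * (v - ‖m‖ ^ 2) := by
  set N : ℝ := (Fintype.card ι : ℝ) with hN_def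
  have hN : N ≠ 0 := by simp [N]
  have hcenter : ∀ ω, N⁻¹ • ∑ i, Z i ω - m = N⁻¹ • ∑ i, (Z i ω - m) := fun ω ↦ by
    simp [Finset.sum_sub_distrib, smul_sub, ← Nat.cast_smul_eq_nsmul ℝ, ← hN_def, hN]
  have hsum := integral_norm_sum_sub_integral_sq (s := Finset.univ) (fun i _ ↦ hZ i)
    fun i _ j _ hij ↦ hindep hij
  simp only [hmean, hsq, Finset.sum_const, Finset.card_univ, nsmul_eq_mul, ← hN_def] at hsum
  simp only [hcenter, norm_smul, mul_pow, integral_const_mul, hsum, Real.norm_eq_abs, sq_abs]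
  field_simp

end SampleMean

section CharFun

open scoped RealInnerProductSpace ComplexConjugate

variable {Ω E ι κ : Type*} [MeasurableSpace Ω] {P : Measure Ω}
  [NormedAddCommGroup E] [InnerProductSpace ℝ E] [MeasurableSpace E] {μ : Measure E}

theorem charFun_eq_ofReal_integral_cos [OpensMeasurableSpace E] [MeasurableNeg E]
    [IsFiniteMeasure μ] [μ.IsNegInvariant] (t : E) :
    charFun μ t = ((∫ y, Real.cos ⟪y, t⟫ ∂μ : ℝ) : ℂ) := by
  have hreal : conj (charFun μ t) = charFun μ t := by
    rw [← charFun_neg, charFun_apply, charFun_apply,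
      ← integral_neg_eq_self fun y ↦ Complex.exp (⟪y, t⟫ * Complex.I)]
    simp only [inner_neg_left, inner_neg_right]
  have hre : (charFun μ t).re = ∫ y, Real.cos ⟪y, t⟫ ∂μ := by
    have hint := (BoundedContinuousFunction.innerProbChar t).integrable μ
    rw [charFun_eq_integral_innerProbChar]
    refine (integral_re hint).symm.trans ?_
    simp [BoundedContinuousFunction.innerProbChar_apply, Complex.exp_ofReal_mul_I_re]
  rw [← hre, Complex.conj_eq_iff_re.mp hreal]

/-- The empirical characteristic function of a finite sample `y` of points of `E`, that is, the
characteristic function of the uniform measure on the sample. At `xᵢ - xⱼ` it is the `(i, j)` entry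
of the random Fourier approximation of the kernel matrix with frequencies `y`. -/
noncomputable def empiricalCharFun [Fintype κ] (y : κ → E) (t : E) : ℂ :=
  (Fintype.card κ : ℂ)⁻¹ * ∑ l, Complex.exp (⟪y l, t⟫ * Complex.I)

variable [OpensMeasurableSpace E]

theorem integral_exp_inner_mul_I_of_hasLaw {X : Ω → E} (hX : HasLaw X μ P) (t : E) :
    ∫ ω, Complex.exp (⟪X ω, t⟫ * Complex.I) ∂P = charFun μ t :=
  hX.integral_comp (f := fun y ↦ Complex.exp (⟪y, t⟫ * Complex.I))
    (Measurable.aestronglyMeasurable (by fun_prop))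

theorem memLp_exp_inner_mul_I [IsFiniteMeasure P] {X : Ω → E} (hX : AEMeasurable X P) (t : E)
    (p : ENNReal) : MemLp (fun ω ↦ Complex.exp (⟪X ω, t⟫ * Complex.I)) p P :=
  .of_bound (AEMeasurable.aestronglyMeasurable (by fun_prop)) 1 <|
    .of_forall fun ω ↦ (Complex.norm_exp_ofReal_mul_I _).le

variable [Fintype κ] {w : κ → Ω → E}

theorem memLp_empiricalCharFun [IsFiniteMeasure P] (hw : ∀ l, AEMeasurable (w l) P) (t : E)
    (p : ENNReal) : MemLp (fun ω ↦ empiricalCharFun (w · ω) t) p P :=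
  (memLp_finsetSum _ fun l _ ↦ memLp_exp_inner_mul_I (hw l) t p).const_mul _

theorem integral_empiricalCharFun [Nonempty κ] [IsFiniteMeasure P]
    (hlaw : ∀ l, HasLaw (w l) μ P) (t : E) :
    ∫ ω, empiricalCharFun (w · ω) t ∂P = charFun μ t := by
  simp only [empiricalCharFun]
  rw [integral_const_mul, integral_finsetSum _ fun l _ ↦
    memLp_one_iff_integrable.mp (memLp_exp_inner_mul_I (hlaw l).aemeasurable t 1)]
  simp [integral_exp_inner_mul_I_of_hasLaw (hlaw _)]

variable [Nonempty κ] [IsProbabilityMeasure P]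

theorem integral_norm_empiricalCharFun_sub_charFun_sq (hlaw : ∀ l, HasLaw (w l) μ P)
    (hindep : Pairwise fun l l' ↦ w l ⟂ᵢ[P] w l') (t : E) :
    ∫ ω, ‖empiricalCharFun (w · ω) t - charFun μ t‖ ^ 2 ∂P =
      (Fintype.card κ : ℝ)⁻¹ * (1 - ‖charFun μ t‖ ^ 2) := by
  have hexp : Measurable fun y : E ↦ Complex.exp (⟪y, t⟫ * Complex.I) := by fun_prop
  have h := integral_norm_sampleMean_sub_sq (v := 1)
    (fun l ↦ memLp_exp_inner_mul_I (hlaw l).aemeasurable t 2)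
    (fun l l' hll' ↦ (hindep hll').comp hexp hexp)
    (fun l ↦ integral_exp_inner_mul_I_of_hasLaw (hlaw l) t)
    (fun l ↦ by simp [Complex.norm_exp_ofReal_mul_I])
  simpa [empiricalCharFun] using h

theorem random_fourier_complex_unbiased_and_error_general [Fintype ι] (x : ι → E)
    (hlaw : ∀ l, HasLaw (w l) μ P) (hindep : Pairwise fun l l' ↦ w l ⟂ᵢ[P] w l') :
    (∀ i j, ∫ ω, empiricalCharFun (w · ω) (x i - x j) ∂P = charFun μ (x i - x j)) ∧
    ∫ ω, ∑ i, ∑ j, ‖empiricalCharFun (w · ω) (x i - x j) - charFun μ (x i - x j)‖ ^ 2 ∂P =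
      (Fintype.card κ : ℝ)⁻¹ *
        ((Fintype.card ι : ℝ) ^ 2 - ∑ i, ∑ j, ‖charFun μ (x i - x j)‖ ^ 2) := by
  refine ⟨fun i j ↦ integral_empiricalCharFun hlaw _, ?_⟩
  have hint : ∀ i j, Integrable
      (fun ω ↦ ‖empiricalCharFun (w · ω) (x i - x j) - charFun μ (x i - x j)‖ ^ 2) P := fun i j ↦
    ((memLp_empiricalCharFun (fun l ↦ (hlaw l).aemeasurable) _ 2).sub
      (memLp_const _)).norm.integrable_sq
  rw [integral_finsetSum _ fun i _ ↦ integrable_finsetSum _ fun j _ ↦ hint i j]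
  simp only [integral_finsetSum _ fun j _ ↦ hint _ j,
    integral_norm_empiricalCharFun_sub_charFun_sq hlaw hindep, ← Finset.mul_sum,
    Finset.sum_sub_distrib]
  simp [sq]

end CharFun

/-- Theorem 4.1 (complex case): unbiasedness and exact expected squared Frobenius-norm
error of the complex random Fourier feature map. Here `μ` is a symmetric probability
measure on `ℝ` with real characteristic function `k`, `K` is the kernel matrix on
points `x₁, …, xₙ`, and `w₁, …, w_D` are i.i.d. with law `μ`. -/
theorem random_fourier_complex_unbiased_and_error
    (μ : Measure ℝ) [IsProbabilityMeasure μ]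
    (hsymm : μ.map (fun x : ℝ => -x) = μ)
    (k : ℝ → ℝ) (hk : ∀ r : ℝ, k r = ∫ x : ℝ, Real.cos (r * x) ∂μ)
    (n : ℕ) (x : Fin n → ℝ)
    (K : Fin n → Fin n → ℝ) (hK : ∀ i j, K i j = k (x i - x j))
    (D : ℕ) (hD : 0 < D)
    {Ω : Type*} [MeasurableSpace Ω] (P : Measure Ω) [IsProbabilityMeasure P]
    (w : Fin D → Ω → ℝ)
    (hmeas : ∀ l, Measurable (w l))
    (hindep : iIndepFun (m := fun _ : Fin D => (inferInstance : MeasurableSpace ℝ)) w P)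
    (hlaw : ∀ l, P.map (w l) = μ) :
    (∀ i j, (∫ ω, ((D : ℂ))⁻¹ *
        ∑ l : Fin D, Complex.exp (Complex.I * (w l ω) * ((x i : ℂ) - (x j : ℂ))) ∂P)
      = (K i j : ℂ)) ∧
    (∫ ω, ∑ i : Fin n, ∑ j : Fin n,
        ‖((D : ℂ))⁻¹ *
          (∑ l : Fin D, Complex.exp (Complex.I * (w l ω) * ((x i : ℂ) - (x j : ℂ))))
          - (K i j : ℂ)‖ ^ 2 ∂P)
      = ((D : ℝ))⁻¹ * ((n : ℝ) ^ 2 - ∑ i : Fin n, ∑ j : Fin n, (K i j) ^ 2) := by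
  have : μ.IsNegInvariant := ⟨hsymm⟩
  have : Nonempty (Fin D) := Fin.pos_iff_nonempty.mp hD
  have hchar : ∀ i j, charFun μ (x i - x j) = K i j := fun i j ↦ by
    simp [charFun_eq_ofReal_integral_cos, hK, hk]
  have hemp : ∀ i j ω, (D : ℂ)⁻¹ *
      ∑ l, Complex.exp (Complex.I * w l ω * ((x i : ℂ) - x j)) =
        empiricalCharFun (w · ω) (x i - x j) := fun i j ω ↦ by
    simp [empiricalCharFun, mul_comm, mul_assoc]
  simpa [hemp, hchar] using random_fourier_complex_unbiased_and_error_general x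
    (fun l ↦ ⟨(hmeas l).aemeasurable, hlaw l⟩) fun l l' hll' ↦ hindep.indepFun hll'
end

section
/- Let μ be a probability measure on ℝ that is symmetric under negation, with real characteristic function k(r) = ∫_ℝ cos(r x) dμ(x). Fix real numbers x₁, …, xₙ and set K_{ij} = k(x_i − x_j). Let (w_l, b_l), l = 1, …, D, be independent random pairs where, for each l, w_l has law μ, b_l is uniform on (0, 2π), and w_l and b_l are independent. For each l let K̃^{(l)} be the real n×n matrix with entries K̃^{(l)}_{ij} = 2 cos(w_l x_i + b_l) cos(w_l x_j + b_l). Then E[(1/D) Σ_{l=1}^D K̃^{(l)}_{ij}] = K_{ij} for all i, j, and E[Σ_{i,j=1}^n ((1/D) Σ_{l=1}^D K̃^{(l)}_{ij} − K_{ij})²] = (1/D)(n² + (1/2) Σ_{i,j=1}^n k(2(x_i − x_j)) − Σ_{i,j=1}^n K_{ij}²). -/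
open MeasureTheory ProbabilityTheory Real

/-!
Averaging over the phase alone already gives the first two moments of one feature product: by
product-to-sum, `2 cos (s + b) cos (t + b) = cos (s - t) + cos (s + t + 2 b)`, and every harmonic
`cos (c + m b)` with `m ≠ 0` has mean zero for `b` uniform on `(0, 2π)`. Integrating over the
frequency turns these moments into the mean and the variance of one entry of the estimator. The
single-feature estimates are pairwise uncorrelated, so averaging `D` of them divides the variance by
`D`, and the expected squared Frobenius error is the sum of the variances of the entries.
-/

/-- The uniform distribution on `(0, 2π)`, the law of the random phase, encoded as normalized
Lebesgue measure. -/
noncomputable def uniformPhase : Measure ℝ :=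
  (ENNReal.ofReal (2 * π))⁻¹ • volume.restrict (Set.Ioo (0 : ℝ) (2 * π))

instance isProbabilityMeasure_uniformPhase : IsProbabilityMeasure uniformPhase where
  measure_univ := by
    rw [uniformPhase, Measure.smul_apply, Measure.restrict_apply_univ, Real.volume_Ioo, sub_zero,
      smul_eq_mul]
    exact ENNReal.inv_mul_cancel (ENNReal.ofReal_pos.2 two_pi_pos).ne' ENNReal.ofReal_ne_top

lemma integral_cos_add_int_mul_uniformPhase (c : ℝ) {m : ℤ} (hm : m ≠ 0) :
    ∫ b, cos (c + m * b) ∂uniformPhase = 0 := by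
  have hperiod : ∫ b in (0 : ℝ)..2 * π, cos (c + m * b) = 0 := by
    rw [intervalIntegral.integral_comp_add_mul _ (Int.cast_ne_zero.2 hm), integral_cos,
      sin_add_int_mul_two_pi, mul_zero, add_zero, sub_self, smul_zero]
  rw [uniformPhase, integral_smul_measure, ← integral_Ioc_eq_integral_Ioo,
    ← intervalIntegral.integral_of_le two_pi_pos.le, hperiod, smul_zero]

lemma integrable_cos_comp {α : Type*} [MeasurableSpace α] {ρ : Measure α} [IsFiniteMeasure ρ]
    {g : α → ℝ} (hg : AEMeasurable g ρ) : Integrable (fun a => cos (g a)) ρ :=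
  .of_bound (measurable_cos.comp_aemeasurable hg).aestronglyMeasurable 1
    (.of_forall fun a => abs_cos_le_one (g a))

lemma integral_two_mul_cos_mul_cos_uniformPhase (s t : ℝ) :
    ∫ b, 2 * cos (s + b) * cos (t + b) ∂uniformPhase = cos (s - t) := by
  have hprod (b : ℝ) :
      2 * cos (s + b) * cos (t + b) = cos (s - t) + cos (s + t + (2 : ℤ) * b) := by
    rw [two_mul_cos_mul_cos]
    congr 2 <;> push_cast <;> ring
  simp_rw [hprod]
  rw [integral_add (integrable_const _) (integrable_cos_comp (by fun_prop)),
    integral_cos_add_int_mul_uniformPhase _ two_ne_zero]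
  simp

lemma integral_two_mul_cos_mul_cos_sq_uniformPhase (s t : ℝ) :
    ∫ b, (2 * cos (s + b) * cos (t + b)) ^ 2 ∂uniformPhase = 1 + 1 / 2 * cos (2 * (s - t)) := by
  have hsq (b : ℝ) : (2 * cos (s + b) * cos (t + b)) ^ 2
      = 1 + 1 / 2 * cos (2 * (s - t)) + (2 * cos (s - t) * cos (s + t + (2 : ℤ) * b)
        + 1 / 2 * cos (2 * (s + t) + (4 : ℤ) * b)) := by
    have hdiff : s + b - (t + b) = s - t := by ring
    have hsum : s + b + (t + b) = s + t + (2 : ℤ) * b := by push_cast; ring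
    have hdouble : 2 * (s + t) + (4 : ℤ) * b = 2 * (s + t + (2 : ℤ) * b) := by push_cast; ring
    rw [two_mul_cos_mul_cos, hdiff, hsum, hdouble, cos_two_mul, cos_two_mul]
    ring
  have hint (a c : ℝ) (m : ℤ) : Integrable (fun b => a * cos (c + m * b)) uniformPhase :=
    (integrable_cos_comp (by fun_prop)).const_mul a
  simp_rw [hsq]
  rw [integral_add (integrable_const _) ((hint _ _ 2).fun_add (hint _ _ 4)),
    integral_add (hint _ _ 2) (hint _ _ 4), integral_const_mul, integral_const_mul,
    integral_cos_add_int_mul_uniformPhase _ two_ne_zero,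
    integral_cos_add_int_mul_uniformPhase _ four_ne_zero]
  simp

section FeatureProduct

variable {E : Type*} [NormedAddCommGroup E] [InnerProductSpace ℝ E]

/-- The product `z(x) z(y)` of two random Fourier features `z(x) = √2 cos (⟪x, w⟫ + b)`, as a
function of the pair `(w, b)` of frequency and phase: one entry of a single-feature estimate of the
kernel matrix. -/
noncomputable def fourierFeatureProduct (x y : E) (p : E × ℝ) : ℝ :=
  2 * cos (inner ℝ x p.1 + p.2) * cos (inner ℝ y p.1 + p.2)

lemma abs_fourierFeatureProduct_le (x y : E) (p : E × ℝ) : |fourierFeatureProduct x y p| ≤ 2 := by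
  rw [fourierFeatureProduct, mul_assoc, abs_mul, abs_mul, abs_two]
  exact mul_le_of_le_one_right zero_le_two
    (mul_le_one₀ (abs_cos_le_one _) (abs_nonneg _) (abs_cos_le_one _))

variable [MeasurableSpace E] [OpensMeasurableSpace E]

lemma measurable_fourierFeatureProduct (x y : E) : Measurable (fourierFeatureProduct x y) := by
  have hinner (z : E) : Measurable fun p : E × ℝ => inner ℝ z p.1 :=
    (innerSL ℝ z).continuous.measurable.comp measurable_fst
  exact ((((hinner x).add measurable_snd).cos).const_mul 2).mul ((hinner y).add measurable_snd).cos

lemma memLp_fourierFeatureProduct (x y : E) (q : ENNReal) (ρ : Measure (E × ℝ))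
    [IsFiniteMeasure ρ] : MemLp (fourierFeatureProduct x y) q ρ :=
  .of_bound (measurable_fourierFeatureProduct x y).aestronglyMeasurable 2
    (.of_forall (abs_fourierFeatureProduct_le x y))

lemma integrable_cos_inner (μ : Measure E) [IsFiniteMeasure μ] (r : E) :
    Integrable (fun w => cos (inner ℝ r w)) μ :=
  integrable_cos_comp (innerSL ℝ r).continuous.measurable.aemeasurable

lemma integral_fourierFeatureProduct (μ : Measure E) [IsFiniteMeasure μ] (x y : E) :
    ∫ p, fourierFeatureProduct x y p ∂(μ.prod uniformPhase) = ∫ w, cos (inner ℝ (x - y) w) ∂μ := by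
  rw [integral_prod _ ((memLp_fourierFeatureProduct x y 1 _).integrable le_rfl)]
  simp only [fourierFeatureProduct, integral_two_mul_cos_mul_cos_uniformPhase, inner_sub_left]

variable (μ : Measure E) [IsProbabilityMeasure μ] (x y : E)

lemma integral_fourierFeatureProduct_sq :
    ∫ p, fourierFeatureProduct x y p ^ 2 ∂(μ.prod uniformPhase)
      = 1 + 1 / 2 * ∫ w, cos (inner ℝ ((2 : ℝ) • (x - y)) w) ∂μ := by
  rw [integral_prod _ (memLp_fourierFeatureProduct x y 2 _).integrable_sq]
  simp only [fourierFeatureProduct, integral_two_mul_cos_mul_cos_sq_uniformPhase,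
    ← inner_sub_left, ← real_inner_smul_left]
  rw [integral_add (integrable_const _) ((integrable_cos_inner μ _).const_mul _),
    integral_const_mul]
  simp

lemma variance_fourierFeatureProduct :
    Var[fourierFeatureProduct x y; μ.prod uniformPhase]
      = 1 + 1 / 2 * ∫ w, cos (inner ℝ ((2 : ℝ) • (x - y)) w) ∂μ
        - (∫ w, cos (inner ℝ (x - y) w) ∂μ) ^ 2 := by
  rw [variance_eq_sub (memLp_fourierFeatureProduct x y 2 _), integral_fourierFeatureProduct]
  simp only [Pi.pow_apply, integral_fourierFeatureProduct_sq]

end FeatureProduct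

section SampleMean

variable {Ω κ : Type*} [Fintype κ]

/-- The empirical mean of a finite family of real random variables, used for the average of the
single-feature estimates. Over an empty family it is the junk value `0`. -/
noncomputable def sampleMean (X : κ → Ω → ℝ) (ω : Ω) : ℝ :=
  (Fintype.card κ : ℝ)⁻¹ * ∑ l, X l ω

variable [MeasurableSpace Ω] {P : Measure Ω} {X : κ → Ω → ℝ}

lemma memLp_sampleMean {q : ENNReal} (hX : ∀ l, MemLp (X l) q P) : MemLp (sampleMean X) q P :=
  (memLp_finsetSum _ fun l _ => hX l).const_mul _

lemma integral_sampleMean [Nonempty κ] (hX : ∀ l, Integrable (X l) P) {m : ℝ}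
    (hm : ∀ l, P[X l] = m) : P[sampleMean X] = m := by
  simp only [sampleMean]
  rw [integral_const_mul, integral_finsetSum _ fun l _ => hX l]
  simp [hm]

lemma variance_sampleMean [IsFiniteMeasure P] (hX : ∀ l, MemLp (X l) 2 P)
    (hcov : Pairwise fun l l' => cov[X l, X l'; P] = 0) {v : ℝ} (hv : ∀ l, Var[X l; P] = v) :
    Var[sampleMean X; P] = (Fintype.card κ : ℝ)⁻¹ * v := by
  have hdiag (l : κ) : ∑ l', cov[X l, X l'; P] = v := by
    rw [Fintype.sum_eq_single l fun l' hne => hcov hne.symm, covariance_self (hX l).aemeasurable,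
      hv l]
  have hsum : Var[fun ω => ∑ l, X l ω; P] = Fintype.card κ * v := by
    rw [variance_fun_sum hX]
    simp only [hdiag, Finset.sum_const, Finset.card_univ, nsmul_eq_mul]
  unfold sampleMean
  rw [variance_const_mul, hsum]
  field_simp

lemma integral_sampleMean_sub_sq [Nonempty κ] [IsFiniteMeasure P] (hX : ∀ l, MemLp (X l) 2 P)
    (hcov : Pairwise fun l l' => cov[X l, X l'; P] = 0) {m v : ℝ}
    (hm : ∀ l, P[X l] = m) (hv : ∀ l, Var[X l; P] = v) :
    ∫ ω, (sampleMean X ω - m) ^ 2 ∂P = (Fintype.card κ : ℝ)⁻¹ * v := by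
  rw [← variance_sampleMean hX hcov hv, variance_eq_integral (memLp_sampleMean hX).aemeasurable,
    integral_sampleMean (fun l => (hX l).integrable one_le_two) hm]

lemma integral_sum_sampleMean_sub_sq [Nonempty κ] [IsFiniteMeasure P] {β : Type*} [Fintype β]
    {Y : β → κ → Ω → ℝ} (hY : ∀ a l, MemLp (Y a l) 2 P)
    (hcov : ∀ a, Pairwise fun l l' => cov[Y a l, Y a l'; P] = 0) {m v : β → ℝ}
    (hm : ∀ a l, P[Y a l] = m a) (hv : ∀ a l, Var[Y a l; P] = v a) :
    ∫ ω, ∑ a, (sampleMean (Y a) ω - m a) ^ 2 ∂P = (Fintype.card κ : ℝ)⁻¹ * ∑ a, v a := by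
  have hint (a : β) : Integrable (fun ω => (sampleMean (Y a) ω - m a) ^ 2) P :=
    ((memLp_sampleMean (hY a)).sub (memLp_const _)).integrable_sq
  rw [integral_finsetSum _ fun a _ => hint a, Finset.mul_sum]
  exact Finset.sum_congr rfl fun a _ =>
    integral_sampleMean_sub_sq (hY a) (hcov a) (hm a) (hv a)

end SampleMean

theorem random_fourier_real_unbiased_and_error_general
    {E : Type*} [NormedAddCommGroup E] [InnerProductSpace ℝ E] [MeasurableSpace E]
    [OpensMeasurableSpace E] (μ : Measure E) [IsProbabilityMeasure μ]
    (k : E → ℝ) (hk : ∀ r, k r = ∫ w, cos (inner ℝ r w) ∂μ)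
    {ι κ : Type*} [Fintype ι] [Fintype κ] [Nonempty κ] (x : ι → E)
    (K : ι → ι → ℝ) (hK : ∀ i j, K i j = k (x i - x j))
    {Ω : Type*} [MeasurableSpace Ω] (P : Measure Ω)
    (wb : κ → Ω → E × ℝ) (hindep : Pairwise fun l l' => wb l ⟂ᵢ[P] wb l')
    (hlaw : ∀ l, HasLaw (wb l) (μ.prod uniformPhase) P) :
    (∀ i j, ∫ ω, sampleMean (fun l ω => fourierFeatureProduct (x i) (x j) (wb l ω)) ω ∂P
      = K i j) ∧
    ∫ ω, ∑ i, ∑ j,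
        (sampleMean (fun l ω => fourierFeatureProduct (x i) (x j) (wb l ω)) ω - K i j) ^ 2 ∂P
      = (Fintype.card κ : ℝ)⁻¹ * ((Fintype.card ι : ℝ) ^ 2
          + (1 / 2) * ∑ i, ∑ j, k ((2 : ℝ) • (x i - x j)) - ∑ i, ∑ j, K i j ^ 2) := by
  have : IsProbabilityMeasure P := (hlaw (Classical.arbitrary κ)).isProbabilityMeasure
  have hLp (i j : ι) (l : κ) : MemLp (fun ω => fourierFeatureProduct (x i) (x j) (wb l ω)) 2 P :=
    (memLp_fourierFeatureProduct (x i) (x j) 2 _).comp_of_map (hlaw l).aemeasurable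
  have hmean (i j : ι) (l : κ) : ∫ ω, fourierFeatureProduct (x i) (x j) (wb l ω) ∂P = K i j := by
    rw [hK, hk, ← integral_fourierFeatureProduct]
    exact (hlaw l).integral_comp (measurable_fourierFeatureProduct _ _).aestronglyMeasurable
  have hvar (i j : ι) (l : κ) : Var[fun ω => fourierFeatureProduct (x i) (x j) (wb l ω); P]
      = 1 + 1 / 2 * k ((2 : ℝ) • (x i - x j)) - K i j ^ 2 := by
    rw [hK, hk, hk, ← variance_fourierFeatureProduct, ← (hlaw l).map_eq, variance_map
      (measurable_fourierFeatureProduct _ _).aemeasurable (hlaw l).aemeasurable, Function.comp_def]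
  have hcov (i j : ι) : Pairwise fun l l' =>
      cov[fun ω => fourierFeatureProduct (x i) (x j) (wb l ω),
        fun ω => fourierFeatureProduct (x i) (x j) (wb l' ω); P] = 0 := fun l l' hne =>
    have hmeas := measurable_fourierFeatureProduct (x i) (x j)
    ((hindep hne).comp hmeas hmeas).covariance_eq_zero (hLp i j l) (hLp i j l')
  refine ⟨fun i j => integral_sampleMean (fun l => (hLp i j l).integrable one_le_two) (hmean i j),
    ?_⟩
  have herror := integral_sum_sampleMean_sub_sq (β := ι × ι) (fun a => hLp a.1 a.2)
    (fun a => hcov a.1 a.2) (fun a => hmean a.1 a.2) (fun a => hvar a.1 a.2)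
  simp only [Fintype.sum_prod_type] at herror
  rw [herror]
  simp [Finset.sum_add_distrib, Finset.sum_sub_distrib, ← Finset.mul_sum, sq]

/-- Theorem 4.1 (real case): unbiasedness and exact expected squared Frobenius-norm
error of the real random Fourier feature map `z(x) = √2 cos(w x + b)`. Here `μ` is a
symmetric probability measure on `ℝ` with real characteristic function `k`, `K` is the
kernel matrix on points `x₁, …, xₙ`, and `(w_l, b_l)` are i.i.d. pairs with `w_l` of
law `μ` and `b_l` uniform on `(0, 2π)`, independent of each other. -/
theorem random_fourier_real_unbiased_and_error
    (μ : Measure ℝ) [IsProbabilityMeasure μ]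
    (hsymm : μ.map (fun x : ℝ => -x) = μ)
    (k : ℝ → ℝ) (hk : ∀ r : ℝ, k r = ∫ x : ℝ, Real.cos (r * x) ∂μ)
    (n : ℕ) (x : Fin n → ℝ)
    (K : Fin n → Fin n → ℝ) (hK : ∀ i j, K i j = k (x i - x j))
    (D : ℕ) (hD : 0 < D)
    {Ω : Type*} [MeasurableSpace Ω] (P : Measure Ω) [IsProbabilityMeasure P]
    (wb : Fin D → Ω → ℝ × ℝ)
    (hmeas : ∀ l, Measurable (wb l))
    (hindep : iIndepFun (m := fun _ : Fin D => (inferInstance : MeasurableSpace (ℝ × ℝ))) wb P)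
    (hlaw : ∀ l, P.map (wb l)
      = μ.prod ((ENNReal.ofReal (2 * π))⁻¹ • volume.restrict (Set.Ioo (0 : ℝ) (2 * π)))) :
    (∀ i j, (∫ ω, ((D : ℝ))⁻¹ *
        ∑ l : Fin D, 2 * Real.cos ((wb l ω).1 * x i + (wb l ω).2)
          * Real.cos ((wb l ω).1 * x j + (wb l ω).2) ∂P)
      = K i j) ∧
    (∫ ω, ∑ i : Fin n, ∑ j : Fin n,
        (((D : ℝ))⁻¹ *
          (∑ l : Fin D, 2 * Real.cos ((wb l ω).1 * x i + (wb l ω).2)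
            * Real.cos ((wb l ω).1 * x j + (wb l ω).2))
          - K i j) ^ 2 ∂P)
      = ((D : ℝ))⁻¹ * ((n : ℝ) ^ 2
          + (1 / 2) * ∑ i : Fin n, ∑ j : Fin n, k (2 * (x i - x j))
          - ∑ i : Fin n, ∑ j : Fin n, (K i j) ^ 2) := by
  have : Nonempty (Fin D) := Fin.pos_iff_nonempty.1 hD
  simpa [fourierFeatureProduct, sampleMean] using random_fourier_real_unbiased_and_error_general μ k
    (by simpa [mul_comm] using hk) x K hK P wb (fun _ _ hne => hindep.indepFun hne)
    fun l => ⟨(hmeas l).aemeasurable, hlaw l⟩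
end
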